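/- Let q be a real number with 0 < q and q ≠ 1, let h₁, l₁, l₂, α₁, λ be real numbers and t₁, t₂ nonzero reals. Assume λ + α₁ = -N for some positive integer N (so (q^{λ+α₁};q)_n = 0 for all n > N and the series below is a finite sum), and assume q^{h₁-l₁+n} ≠ 1 and q^{h₁-l₂+n}·t₁/t₂ ≠ 1 for all integers 1 ≤ n ≤ N. Then the function g(x) = x^{λ} · Σ_{n=0}^{N} (q^{h₁+1/2}t₁/x;q)_n · (q^{λ+α₁};q)_n · q^{n(n-1)/2} · (-q^{-λ-α₁-l₁-l₂+h₁+3/2}·x/t₂)^n / ((q^{h₁-l₁+1};q)_n (q^{h₁-l₂+1}·t₁/t₂;q)_n (q;q)_n) satisfies the variant of the confluent q-hypergeometric equation of type (2,1) for all x > 0. -/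

import Mathlib

/-- The finite q-shifted factorial `(a;q)_n = ∏_{i=0}^{n-1} (1 - a q^i)`. -/
noncomputable def qPoch (q a : ℝ) (n : ℕ) : ℝ :=
  ∏ i ∈ Finset.range n, (1 - a * q ^ i)

/-- The variant of the confluent q-hypergeometric equation of type (2,1) (for `x > 0`). -/
def confEq21 (q h₁ l₁ l₂ α₁ lam t₁ t₂ : ℝ) (g : ℝ → ℝ) : Prop :=
  ∀ x : ℝ, 0 < x →
    (x - q ^ (l₁ - 1/2) * t₁) * (x - q ^ (l₂ - 1/2) * t₂) * g (q * x)
    - q ^ (-h₁ + l₁ + l₂ + 2 * lam - 1/2) * t₂ * (x - q ^ (h₁ + 1/2) * t₁) * g (x / q)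
    - (q ^ (-α₁) * x ^ 2
        - q ^ (l₁ + l₂ + lam - 1/2) * (q ^ (-l₂) * t₁ + (q ^ (-h₁) + q ^ (-l₁)) * t₂) * x
        + q ^ (l₁ + l₂ + lam) * (1 + q⁻¹) * t₁ * t₂) * g x = 0

/-- The shifted-power basis `∏_{i<n} (y - a q^i)`. -/
noncomputable def shiftP (q a : ℝ) (n : ℕ) (y : ℝ) : ℝ :=
  ∏ i ∈ Finset.range n, (y - a * q ^ i)

theorem shiftP_succ (q a : ℝ) (n : ℕ) (y : ℝ) :
    shiftP q a (n + 1) y = shiftP q a n y * (y - a * q ^ n) := by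
  simp [shiftP, Finset.prod_range_succ]

theorem shiftP_mul (q a : ℝ) (hq : q ≠ 0) (n : ℕ) (x : ℝ) :
    shiftP q a (n + 1) (q * x) = q ^ (n + 1) * (x - a / q) * shiftP q a n x := by
  induction n with
  | zero => simp [shiftP]; field_simp
  | succ n ih =>
    rw [shiftP_succ, ih, shiftP_succ q a n x]; ring

theorem shiftP_div (q a : ℝ) (hq : q ≠ 0) (n : ℕ) (x : ℝ) :
    q ^ n * ((x - a) * shiftP q a n (x / q)) = shiftP q a (n + 1) x := by
  induction n with
  | zero => simp [shiftP]
  | succ n ih =>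
    rw [shiftP_succ q a (n + 1) x, ← ih, shiftP_succ q a n (x / q)]
    field_simp
    ring

theorem core (q a b c u x : ℝ) (hq : q ≠ 0) (ha : a ≠ 0) (d : ℕ → ℝ) (N : ℕ)
        (hd : ∀ n < N, d (n + 1) * ((b - a * q ^ n) * (c - a * q ^ n) * (1 - q ^ (n + 1)))
      = d n * (q ^ n - u) * q ^ n * a) :
    ∀ m ≤ N, ∑ n ∈ Finset.range (m + 1), d n * ((x - b) * (x - c) * shiftP q a n (q * x)
      - q * b * c / a * ((x - a) * shiftP q a n (x / q))
      - (u * x ^ 2 - (b + c + q * b * c / a) * x + b * c * (1 + q)) * shiftP q a n x)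
      = d m * (q ^ m - u) * x ^ 2 * shiftP q a m x := by
  intro m
  induction m with
  | zero =>
    intro _
    simp [shiftP]
    field_simp
    ring
  | succ m ih =>
    intro hm
    rw [Finset.sum_range_succ, ih (by omega), shiftP_mul q a hq]
    have hQ : q ^ m ≠ 0 := pow_ne_zero _ hq
    have e1 : (x - a) * shiftP q a (m + 1) (x / q)
        = shiftP q a m x * (x - a * q ^ m) * (x - a * q ^ (m + 1)) / q ^ (m + 1) := by
      rw [eq_div_iff (pow_ne_zero _ hq), mul_comm, shiftP_div q a hq, shiftP_succ, shiftP_succ]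
    rw [e1, shiftP_succ]
    have e2 : d m * (q ^ m - u)
        = d (m + 1) * ((b - a * q ^ m) * (c - a * q ^ m) * (1 - q ^ (m + 1))) / (q ^ m * a) := by
      rw [eq_div_iff (mul_ne_zero hQ ha), hd m (by omega)]; ring
    rw [e2, pow_succ]
    generalize q ^ m = Q at *
    field_simp
    ring

theorem qPoch_succ (q a : ℝ) (n : ℕ) : qPoch q a (n + 1) = qPoch q a n * (1 - a * q ^ n) := by
  simp [qPoch, Finset.prod_range_succ]

theorem qPoch_shiftP (q a : ℝ) (n : ℕ) (y : ℝ) (hy : y ≠ 0) :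
    qPoch q (a / y) n * y ^ n = shiftP q a n y := by
  induction n with
  | zero => simp [qPoch, shiftP]
  | succ n ih =>
    rw [qPoch_succ, shiftP_succ, ← ih]
    field_simp
    ring

/-- Abstract coefficients. -/
noncomputable def coefD (q v r1 r2 z : ℝ) (n : ℕ) : ℝ :=
  qPoch q v n * q ^ ((n : ℝ) * ((n : ℝ) - 1) / 2) * (-z) ^ n /
    (qPoch q r1 n * qPoch q r2 n * qPoch q q n)

theorem coefD_succ (q v r1 r2 z : ℝ) (hq : 0 < q) (n : ℕ) (h1 : 1 - r1 * q ^ n ≠ 0)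
    (h2 : 1 - r2 * q ^ n ≠ 0) (h3 : 1 - q * q ^ n ≠ 0) :
    coefD q v r1 r2 z (n + 1) * ((1 - r1 * q ^ n) * (1 - r2 * q ^ n) * (1 - q * q ^ n))
      = coefD q v r1 r2 z n * ((1 - v * q ^ n) * q ^ n * (-z)) := by
  have e : q ^ (((n + 1 : ℕ) : ℝ) * (((n + 1 : ℕ) : ℝ) - 1) / 2)
      = q ^ ((n : ℝ) * ((n : ℝ) - 1) / 2) * q ^ n := by
    rw [← Real.rpow_natCast q n, ← Real.rpow_add hq]
    congr 1; push_cast; ring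
  unfold coefD
  rw [e]
  simp only [qPoch_succ]
  rw [div_mul_eq_mul_div, div_mul_eq_mul_div]
  rw [show qPoch q r1 n * (1 - r1 * q ^ n) * (qPoch q r2 n * (1 - r2 * q ^ n)) *
    (qPoch q q n * (1 - q * q ^ n)) = (qPoch q r1 n * qPoch q r2 n * qPoch q q n) *
      ((1 - r1 * q ^ n) * (1 - r2 * q ^ n) * (1 - q * q ^ n)) by ring]
  rw [mul_div_mul_right _ _ (mul_ne_zero (mul_ne_zero h1 h2) h3)]
  ring

theorem stmt14 (q h₁ l₁ l₂ α₁ lam t₁ t₂ : ℝ) (N : ℕ)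
    (hq : 0 < q) (hq1 : q ≠ 1) (ht₁ : t₁ ≠ 0) (ht₂ : t₂ ≠ 0)
    (hN : 0 < N) (hNlam : lam + α₁ = -(N : ℝ))
    (hden : ∀ n : ℕ, 1 ≤ n → n ≤ N →
      q ^ (h₁ - l₁ + (n : ℝ)) ≠ 1 ∧ q ^ (h₁ - l₂ + (n : ℝ)) * t₁ / t₂ ≠ 1) :
    confEq21 q h₁ l₁ l₂ α₁ lam t₁ t₂ (fun x =>
      x ^ lam * ∑ n ∈ Finset.range (N + 1),
        qPoch q (q ^ (h₁ + 1/2) * t₁ / x) n * qPoch q (q ^ (lam + α₁)) n *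
            q ^ ((n : ℝ) * ((n : ℝ) - 1) / 2) *
            (-(q ^ (-lam - α₁ - l₁ - l₂ + h₁ + 3/2) * x / t₂)) ^ n /
          (qPoch q (q ^ (h₁ - l₁ + 1)) n * qPoch q (q ^ (h₁ - l₂ + 1) * t₁ / t₂) n *
            qPoch q q n)) := by
  intro x hx
  have hqn : q ≠ 0 := hq.ne'
  have P : ∀ s : ℝ, q ^ s ≠ 0 := fun s => (Real.rpow_pos_of_pos hq s).ne'
  obtain ⟨a, ha⟩ : ∃ a, a = q ^ (h₁ + 1/2) * t₁ := ⟨_, rfl⟩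
  obtain ⟨b, hb⟩ : ∃ b, b = q ^ (l₁ - 1/2) * t₁ := ⟨_, rfl⟩
  obtain ⟨c, hc⟩ : ∃ c, c = q ^ (l₂ - 1/2) * t₂ := ⟨_, rfl⟩
  have ha0 : a ≠ 0 := by rw [ha]; exact mul_ne_zero (P _) ht₁
  have hb0 : b ≠ 0 := by rw [hb]; exact mul_ne_zero (P _) ht₁
  have hc0 : c ≠ 0 := by rw [hc]; exact mul_ne_zero (P _) ht₂
  obtain ⟨L, hL⟩ : ∃ L, L = q ^ lam := ⟨_, rfl⟩
  have hL0 : L ≠ 0 := by rw [hL]; exact P _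
  have hu0 : q ^ N ≠ 0 := pow_ne_zero _ hqn
  have r1 : q ^ (h₁ - l₁ + 1) = a / b := by
    rw [eq_div_iff hb0, ha, hb, ← mul_assoc, ← Real.rpow_add hq]; congr 2; ring
  have r2 : q ^ (h₁ - l₂ + 1) * t₁ / t₂ = a / c := by
    rw [div_eq_div_iff ht₂ hc0, ha, hc]
    have : q ^ (h₁ + 1/2) = q ^ (h₁ - l₂ + 1) * q ^ (l₂ - 1/2) := by
      rw [← Real.rpow_add hq]; congr 1; ring
    rw [this]; ring
  have v1 : q ^ (lam + α₁) = (q ^ N)⁻¹ := by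
    rw [hNlam, Real.rpow_neg hq.le, Real.rpow_natCast]
  have z1 : q ^ (-lam - α₁ - l₁ - l₂ + h₁ + 3/2) / t₂ = q ^ N * a / (b * c) := by
    rw [div_eq_div_iff ht₂ (mul_ne_zero hb0 hc0), ha, hb, hc, ← Real.rpow_natCast q N]
    have : q ^ (N : ℝ) * q ^ (h₁ + 1/2)
        = q ^ (-lam - α₁ - l₁ - l₂ + h₁ + 3/2) * q ^ (l₁ - 1/2) * q ^ (l₂ - 1/2) := by
      rw [← Real.rpow_add hq, ← Real.rpow_add hq, ← Real.rpow_add hq]; congr 1; linarith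
    linear_combination (-t₁ * t₂) * this
  have k1 : q ^ (-h₁ + l₁ + l₂ + 2 * lam - 1/2) * t₂ = L ^ 2 * (q * b * c / a) := by
    rw [mul_div_assoc', eq_div_iff ha0, ha, hb, hc, hL]
    have : q ^ (-h₁ + l₁ + l₂ + 2 * lam - 1/2) * q ^ (h₁ + 1/2)
        = q ^ lam * q ^ lam * q ^ (1:ℝ) * q ^ (l₁ - 1/2) * q ^ (l₂ - 1/2) := by
      simp only [← Real.rpow_add hq]; congr 1; ring
    rw [Real.rpow_one] at this
    linear_combination (t₁ * t₂) * this
  have k2 : q ^ (-α₁) = L * q ^ N := by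
    rw [hL, ← Real.rpow_natCast q N, ← Real.rpow_add hq]; congr 1; linarith
  have k3 : q ^ (l₁ + l₂ + lam - 1/2) * (q ^ (-l₂) * t₁ + (q ^ (-h₁) + q ^ (-l₁)) * t₂)
      = L * (b + c + q * b * c / a) := by
    have e1 : q ^ (l₁ + l₂ + lam - 1/2) * q ^ (-l₂) = L * q ^ (l₁ - 1/2) := by
      rw [hL]; simp only [← Real.rpow_add hq]; congr 1; ring
    have e2 : q ^ (l₁ + l₂ + lam - 1/2) * q ^ (-l₁) = L * q ^ (l₂ - 1/2) := by
      rw [hL]; simp only [← Real.rpow_add hq]; congr 1; ring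
    have e3 : q ^ (l₁ + l₂ + lam - 1/2) * q ^ (-h₁) * t₂ = L * (q * b * c / a) := by
      have : q ^ (l₁ + l₂ + lam - 1/2) * q ^ (-h₁)
          = q ^ (-h₁ + l₁ + l₂ + 2 * lam - 1/2) * q ^ (-lam) := by
        simp only [← Real.rpow_add hq]; congr 1; ring
      rw [this, Real.rpow_neg hq.le, ← hL, mul_right_comm, k1]
      field_simp
    rw [hb, hc] at *
    linear_combination t₁ * e1 + t₂ * e2 + e3
  have k4 : q ^ (l₁ + l₂ + lam) * (1 + q⁻¹) * t₁ * t₂ = L * (b * c * (1 + q)) := by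
    have : q ^ (l₁ + l₂ + lam) = L * q ^ (1:ℝ) * q ^ (l₁ - 1/2) * q ^ (l₂ - 1/2) := by
      rw [hL]; simp only [← Real.rpow_add hq]; congr 1; ring
    rw [Real.rpow_one] at this
    rw [this, hb, hc]; field_simp
    try ring
  have hd : ∀ n < N, coefD q (q ^ N)⁻¹ (a / b) (a / c) (q ^ N * a / (b * c)) (n + 1) *
      ((b - a * q ^ n) * (c - a * q ^ n) * (1 - q ^ (n + 1)))
      = coefD q (q ^ N)⁻¹ (a / b) (a / c) (q ^ N * a / (b * c)) n
        * (q ^ n - q ^ N) * q ^ n * a := by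
    intro n hn
    obtain ⟨g1, g2⟩ := hden (n + 1) (by omega) (by omega)
    have i1 : 1 - a / b * q ^ n ≠ 0 := by
      rw [← r1, ← Real.rpow_natCast q n, ← Real.rpow_add hq]
      intro h; apply g1
      rw [show h₁ - l₁ + ((n + 1 : ℕ) : ℝ) = h₁ - l₁ + 1 + (n : ℝ) by push_cast; ring]
      linarith
    have i2 : 1 - a / c * q ^ n ≠ 0 := by
      rw [← r2]
      intro h; apply g2
      rw [show h₁ - l₂ + ((n + 1 : ℕ) : ℝ) = h₁ - l₂ + 1 + (n : ℝ) by push_cast; ring,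
        Real.rpow_add hq, Real.rpow_natCast]
      linear_combination -h
    have i3 : 1 - q * q ^ n ≠ 0 := by
      rw [← pow_succ']
      intro h
      exact hq1 ((pow_eq_one_iff_of_nonneg hq.le (Nat.succ_ne_zero n)).1 (sub_eq_zero.1 h).symm)
    have key := coefD_succ q (q ^ N)⁻¹ (a / b) (a / c) (q ^ N * a / (b * c)) hq n i1 i2 i3
    generalize coefD q (q ^ N)⁻¹ (a / b) (a / c) (q ^ N * a / (b * c)) (n + 1) = D' at *
    generalize coefD q (q ^ N)⁻¹ (a / b) (a / c) (q ^ N * a / (b * c)) n = D at *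
    have e1 : D' * ((b - a * q ^ n) * (c - a * q ^ n) * (1 - q ^ (n + 1)))
        = b * c * (D' * ((1 - a / b * q ^ n) * (1 - a / c * q ^ n) * (1 - q * q ^ n))) := by
      rw [pow_succ]; field_simp
    rw [e1, key]
    field_simp
    ring
  have main := core q a b c (q ^ N) x hqn ha0 _ N hd N le_rfl
  rw [sub_self, mul_zero, zero_mul, zero_mul] at main
  have hS : ∀ y : ℝ, 0 < y → ∑ n ∈ Finset.range (N + 1),
        qPoch q (q ^ (h₁ + 1/2) * t₁ / y) n * qPoch q (q ^ (lam + α₁)) n *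
            q ^ ((n : ℝ) * ((n : ℝ) - 1) / 2) *
            (-(q ^ (-lam - α₁ - l₁ - l₂ + h₁ + 3/2) * y / t₂)) ^ n /
          (qPoch q (q ^ (h₁ - l₁ + 1)) n * qPoch q (q ^ (h₁ - l₂ + 1) * t₁ / t₂) n *
            qPoch q q n) = ∑ n ∈ Finset.range (N + 1),
        coefD q (q ^ N)⁻¹ (a / b) (a / c) (q ^ N * a / (b * c)) n * shiftP q a n y := by
    intro y hy
    refine Finset.sum_congr rfl fun n _ => ?_
    rw [← qPoch_shiftP q a n y hy.ne', r1, r2, v1, ← ha, mul_div_right_comm (q ^ (-lam - α₁ - l₁ - l₂ + h₁ + 3/2)) y t₂, z1, ← neg_mul, mul_pow,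
      coefD]
    ring
  beta_reduce
  rw [hS x hx, hS (q * x) (mul_pos hq hx), hS (x / q) (div_pos hx hq), k1, k2, k3, k4, ← ha, ← hb,
    ← hc, Real.mul_rpow hq.le hx.le, Real.div_rpow hx.le hq.le, ← hL]
  have m1 : ∀ (k : ℝ) (f : ℕ → ℝ), ∑ n ∈ Finset.range (N + 1),
      coefD q (q ^ N)⁻¹ (a / b) (a / c) (q ^ N * a / (b * c)) n * (k * f n)
      = k * ∑ n ∈ Finset.range (N + 1),
      coefD q (q ^ N)⁻¹ (a / b) (a / c) (q ^ N * a / (b * c)) n * f n := by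
    intro k f
    rw [Finset.mul_sum]; exact Finset.sum_congr rfl fun n _ => by ring
  have main2 := main
  simp_rw [mul_sub (coefD q (q ^ N)⁻¹ (a / b) (a / c) (q ^ N * a / (b * c)) _)] at main2
  rw [Finset.sum_sub_distrib, Finset.sum_sub_distrib, m1, m1, m1, m1] at main2
  generalize ∑ n ∈ Finset.range (N + 1), coefD q (q ^ N)⁻¹ (a / b) (a / c)
    (q ^ N * a / (b * c)) n * shiftP q a n (q * x) = S1 at *
  generalize ∑ n ∈ Finset.range (N + 1), coefD q (q ^ N)⁻¹ (a / b) (a / c)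
    (q ^ N * a / (b * c)) n * shiftP q a n (x / q) = S2 at *
  generalize ∑ n ∈ Finset.range (N + 1), coefD q (q ^ N)⁻¹ (a / b) (a / c)
    (q ^ N * a / (b * c)) n * shiftP q a n x = S3 at *
  have e : L ^ 2 * (q * b * c / a) * (x - a) * (x ^ lam / L * S2)
      = L * x ^ lam * (q * b * c / a * ((x - a) * S2)) := by
    field_simp
  rw [e]
  linear_combination (L * x ^ lam) * main2
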